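/- arXiv:1012.3528 — 2 statements merged into one kernel-verified Lean document; each statement's English description precedes it below -/
import Mathlib

section
/- For the oscillating symbol V(r) = e^{−r^{2p}+r²}·sin(r^{2q}) with real exponents q > p > 1, the moments I(k) = ∫_0^∞ V(r)·e^{−r²}·r^{2k+1} dr satisfy |I(k)| ≤ (2q+1)^{-1}·Γ((k+2)/q) for all k ≥ 0. -/
/-!
Put `h = 1 / q`, `a = p / q` and `s = (k + 1) * h`. The substitution `t = r ^ (2 * q)` turns the
moment into `(2 * q)⁻¹ * ∫ t in (0, ∞), t ^ (s - 1) * e^{-t ^ a} * sin t`, so the claim is that this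
integral times `1 + h / 2` is at most `Γ (s + h)`. On `(0, 1]` the factor `e^{-t ^ a}` is at most
`e^{-t}` and `e^{-t} * sin t` is bounded by a cubic. On `(1, ∞)` the integral is the imaginary part
of that of `z ^ (s - 1) * e^{-z ^ a + I * z}`, and the contour is rotated about `1` into the upper
half plane: there `e^{I * z}` decays, while `re (z ^ a) ≥ (re z) ^ a` keeps `|e^{-z ^ a}|` small.
The resulting bounds are compared with `Γ`, which is convex and hence lies above its tangents at
`1`, `3 / 2` and `2`.
-/

open Set Filter Topology MeasureTheory
open scoped Real

/-! ### Contour rotation -/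

theorem integral_ray_eq_integral_ray {U : Set ℂ} (hUo : IsOpen U) (hUc : Convex ℝ U) {f : ℂ → ℂ}
    (hf : DifferentiableOn ℂ f U) {c d₁ d₂ : ℂ} (h₁ : ∀ y : ℝ, 0 ≤ y → c + y * d₁ ∈ U)
    (h₂ : ∀ y : ℝ, 0 ≤ y → c + y * d₂ ∈ U)
    (hi₁ : IntegrableOn (fun y : ℝ ↦ f (c + y * d₁)) (Ioi 0))
    (hi₂ : IntegrableOn (fun y : ℝ ↦ f (c + y * d₂)) (Ioi 0)) {M : ℝ → ℝ}
    (hM : ∀ᶠ y : ℝ in atTop, ∀ z ∈ segment ℝ (c + y * d₁) (c + y * d₂), ‖f z‖ ≤ M y)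
    (hM0 : Tendsto (fun y ↦ y * M y) atTop (𝓝 0)) :
    d₁ * ∫ y : ℝ in Ioi 0, f (c + y * d₁) = d₂ * ∫ y : ℝ in Ioi 0, f (c + y * d₂) := by
  obtain ⟨G, hG⟩ := hUc.exists_forall_hasDerivWithinAt hf
  have hray {d : ℂ} (hd : ∀ y : ℝ, 0 ≤ y → c + y * d ∈ U) (y : ℝ) (hy : 0 ≤ y) :
      HasDerivAt (fun y : ℝ ↦ G (c + y * d)) (d * f (c + y * d)) y := by
    have hline : HasDerivAt (fun y : ℝ ↦ c + y * d) d y := by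
      simpa using ((Complex.ofRealCLM.hasDerivAt (x := y)).mul_const d).const_add c
    have := ((hG _ (hd y hy)).hasDerivAt (hUo.mem_nhds (hd y hy))).comp y hline
    rwa [mul_comm] at this
  have hgap : Tendsto (fun y : ℝ ↦ G (c + y * d₁) - G (c + y * d₂)) atTop (𝓝 0) := by
    have hbound : ∀ᶠ y : ℝ in atTop,
        ‖G (c + y * d₁) - G (c + y * d₂)‖ ≤ y * M y * ‖d₁ - d₂‖ := by
      filter_upwards [hM, eventually_ge_atTop 0] with y hMy hy
      have hseg := hUc.segment_subset (h₁ y hy) (h₂ y hy)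
      have hmvt := Convex.norm_image_sub_le_of_norm_hasDerivWithin_le
        (fun z hz ↦ (hG z (hseg hz)).mono hseg) hMy (convex_segment _ _)
        (right_mem_segment ℝ _ _) (left_mem_segment ℝ _ _)
      rwa [show c + y * d₁ - (c + y * d₂) = y * (d₁ - d₂) by ring, norm_mul, Complex.norm_real,
        Real.norm_of_nonneg hy, ← mul_assoc, mul_comm (M y)] at hmvt
    exact squeeze_zero_norm' hbound (by simpa using hM0.mul_const ‖d₁ - d₂‖)
  have hftc := integral_Ioi_of_hasDerivAt_of_tendsto'
    (fun y hy ↦ (hray h₁ y hy).sub (hray h₂ y hy)) ((hi₁.const_mul d₁).sub (hi₂.const_mul d₂)) hgap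
  rw [integral_sub (hi₁.const_mul d₁) (hi₂.const_mul d₂), integral_const_mul,
    integral_const_mul] at hftc
  simpa [sub_eq_zero] using hftc

/-! ### Elementary inequalities -/

theorem cos_rpow_le_cos_mul {a φ : ℝ} (ha0 : 0 ≤ a) (ha1 : a ≤ 1) (hφ : |φ| ≤ π / 2) :
    Real.cos φ ^ a ≤ Real.cos (a * φ) := by
  have hφ' := abs_le.mp hφ
  have bernoulli : (1 + (Real.cos φ - 1)) ^ a ≤ 1 + a * (Real.cos φ - 1) :=
    rpow_one_add_le_one_add_mul_self
      (by linarith [Real.cos_nonneg_of_mem_Icc hφ']) ha0 ha1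
  have concave := strictConcaveOn_cos_Icc.concaveOn.2 hφ'
    (show (0 : ℝ) ∈ Icc (-(π / 2)) (π / 2) by constructor <;> linarith [Real.pi_pos])
    ha0 (sub_nonneg.mpr ha1) (add_sub_cancel a 1)
  simp only [smul_eq_mul, mul_zero, add_zero, Real.cos_zero, mul_one] at concave
  rw [add_sub_cancel] at bernoulli
  linarith

theorem re_rpow_le_re_cpow {a : ℝ} {z : ℂ} (ha0 : 0 ≤ a) (ha1 : a ≤ 1) (hz : 0 < z.re) :
    z.re ^ a ≤ (z ^ (a : ℂ)).re := by
  have hcos : 0 ≤ Real.cos z.arg :=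
    Real.cos_nonneg_of_mem_Icc (abs_le.mp (Complex.abs_arg_le_pi_div_two_iff.mpr hz.le))
  rw [Complex.cpow_ofReal_re, ← Complex.norm_mul_cos_arg z, Real.mul_rpow (norm_nonneg z) hcos,
    mul_comm z.arg]
  gcongr
  exact cos_rpow_le_cos_mul ha0 ha1 (Complex.abs_arg_le_pi_div_two_iff.mpr hz.le)

theorem exp_neg_rpow_le {a s x : ℝ} (hx : 1 ≤ x) (hsa : s ≤ a) :
    Real.exp (-x ^ a) ≤ Real.exp (-1) * x ^ (-s) := by
  have hx0 : 0 < x := zero_lt_one.trans_le hx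
  have hle : x ^ s ≤ Real.exp (x ^ a - 1) :=
    (Real.rpow_le_rpow_of_exponent_le hx hsa).trans (by linarith [Real.add_one_le_exp (x ^ a - 1)])
  rw [Real.rpow_neg hx0.le, ← div_eq_mul_inv, le_div_iff₀ (by positivity)]
  calc Real.exp (-x ^ a) * x ^ s ≤ Real.exp (-x ^ a) * Real.exp (x ^ a - 1) := by gcongr
    _ = Real.exp (-1) := by rw [← Real.exp_add]; ring_nf

-- A point of the segment from `1 + R` to `1 + R * (α + β * I)` has real part at least `R / 2` or
-- imaginary part at least `R / 2 * β`.
theorem min_mul_rpow_le_rpow_add {a α β τ R : ℝ} (ha0 : 0 ≤ a) (ha1 : a ≤ 1) (hα : 0 ≤ α)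
    (hβ : 0 ≤ β) (hτ0 : 0 ≤ τ) (hτ1 : τ ≤ 1) (hR : 2 ≤ R) :
    min 1 β * (R / 2) ^ a ≤ (1 + R * (1 - τ) + R * τ * α) ^ a + R * τ * β := by
  have hrpow : 0 ≤ (1 + R * (1 - τ) + R * τ * α) ^ a := by
    have : 0 ≤ 1 - τ := sub_nonneg.mpr hτ1
    positivity
  rcases le_total τ (1 / 2) with hτ | hτ
  · have hhalf : R / 2 ≤ 1 + R * (1 - τ) + R * τ * α := by
      have : 0 ≤ R * (1 / 2 - τ) := mul_nonneg (by linarith) (by linarith)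
      have : 0 ≤ R * τ * α := by positivity
      linarith
    have : 0 ≤ R * τ * β := by positivity
    calc min 1 β * (R / 2) ^ a ≤ 1 * (1 + R * (1 - τ) + R * τ * α) ^ a := by
          gcongr
          exact min_le_left _ _
      _ ≤ _ := by linarith
  · calc min 1 β * (R / 2) ^ a ≤ β * (R / 2) := by
          gcongr
          · exact min_le_right _ _
          · exact Real.rpow_le_self_of_one_le (by linarith) ha1
      _ = R * (1 / 2) * β := by ring
      _ ≤ R * τ * β := by gcongr
      _ ≤ _ := by linarith

theorem le_of_hasDerivAt_le {f f' g g' : ℝ → ℝ} (hf : ∀ x, HasDerivAt f (f' x) x)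
    (hg : ∀ x, HasDerivAt g (g' x) x) {a x : ℝ} (ha : f a ≤ g a) (hle : ∀ y, a ≤ y → f' y ≤ g' y)
    (hx : a ≤ x) : f x ≤ g x :=
  image_le_of_deriv_right_le_deriv_boundary (fun y _ ↦ (hf y).continuousAt.continuousWithinAt)
    (fun y _ ↦ (hf y).hasDerivWithinAt) ha (fun y _ ↦ (hg y).continuousAt.continuousWithinAt)
    (fun y _ ↦ (hg y).hasDerivWithinAt) (fun y hy ↦ hle y hy.1) (right_mem_Icc.mpr hx)

theorem one_sub_le_exp_neg_mul_cos {t : ℝ} (ht : 0 ≤ t) : 1 - t ≤ Real.exp (-t) * Real.cos t := by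
  refine le_of_hasDerivAt_le (f := fun t ↦ 1 - t)
    (f' := fun _ ↦ -1) (g := fun t ↦ Real.exp (-t) * Real.cos t)
    (g' := fun t ↦ -(Real.exp (-t) * (Real.cos t + Real.sin t))) (fun t ↦ ?_) (fun t ↦ ?_)
    (by simp) (fun y hy ↦ ?_) ht
  · simpa using (hasDerivAt_id t).const_sub 1
  · exact ((hasDerivAt_neg t).exp.mul (Real.hasDerivAt_cos t)).congr_deriv (by ring)
  · have hsum : Real.cos y + Real.sin y ≤ Real.exp y := by
      linarith [Real.cos_le_one y, Real.sin_le hy, Real.add_one_le_exp y]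
    rw [neg_le_neg_iff, Real.exp_neg, inv_mul_le_one₀ (Real.exp_pos y)]
    exact hsum

theorem exp_neg_mul_cos_sub_sin_le {t : ℝ} (ht : 0 ≤ t) :
    Real.exp (-t) * (Real.cos t - Real.sin t) ≤ 1 - 2 * t + t ^ 2 := by
  refine le_of_hasDerivAt_le (f := fun t ↦ Real.exp (-t) * (Real.cos t - Real.sin t))
    (f' := fun t ↦ -2 * (Real.exp (-t) * Real.cos t)) (g := fun t ↦ 1 - 2 * t + t ^ 2)
    (g' := fun t ↦ -2 * (1 - t)) (fun t ↦ ?_) (fun t ↦ ?_) (by simp) (fun y hy ↦ ?_) ht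
  · exact ((hasDerivAt_neg t).exp.mul
      ((Real.hasDerivAt_cos t).sub (Real.hasDerivAt_sin t))).congr_deriv
        (by simp only [Pi.sub_apply]; ring)
  · exact ((((hasDerivAt_id t).const_mul 2).const_sub 1).add (hasDerivAt_pow 2 t)).congr_deriv
      (by norm_num; ring)
  · linarith [one_sub_le_exp_neg_mul_cos hy]

theorem exp_neg_mul_sin_le {t : ℝ} (ht : 0 ≤ t) :
    Real.exp (-t) * Real.sin t ≤ t - t ^ 2 + t ^ 3 / 3 := by
  refine le_of_hasDerivAt_le (f := fun t ↦ Real.exp (-t) * Real.sin t)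
    (f' := fun t ↦ Real.exp (-t) * (Real.cos t - Real.sin t)) (g := fun t ↦ t - t ^ 2 + t ^ 3 / 3)
    (g' := fun t ↦ 1 - 2 * t + t ^ 2) (fun t ↦ ?_) (fun t ↦ ?_) (by simp)
    (fun y hy ↦ exp_neg_mul_cos_sub_sin_le hy) ht
  · exact ((hasDerivAt_neg t).exp.mul (Real.hasDerivAt_sin t)).congr_deriv (by ring)
  · exact (((hasDerivAt_id t).sub (hasDerivAt_pow 2 t)).add
      ((hasDerivAt_pow 3 t).div_const 3)).congr_deriv (by norm_num)

/-! ### Half-line integrals -/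

theorem integrableOn_Ioi_comp_const_add {E : Type*} [NormedAddCommGroup E] {f : ℝ → E} {c x : ℝ} :
    IntegrableOn (fun y ↦ f (c + y)) (Ioi x) ↔ IntegrableOn f (Ioi (c + x)) := by
  simpa [Function.comp_def] using
    (measurePreserving_add_left volume c).integrableOn_comp_preimage (f := f)
      (s := Ioi (c + x)) (measurableEmbedding_addLeft c)

theorem integral_Ioi_comp_const_add {E : Type*} [NormedAddCommGroup E] [NormedSpace ℝ E]
    (f : ℝ → E) (c x : ℝ) :
    ∫ y in Ioi x, f (c + y) = ∫ y in Ioi (c + x), f y := by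
  simpa using (measurePreserving_add_left volume c).setIntegral_preimage_emb
    (measurableEmbedding_addLeft c) f (Ioi (c + x))

theorem tendsto_rpow_mul_exp_neg_rpow_atTop {a b : ℝ} (ha : 0 < a) (hb : 0 < b) (N : ℝ) :
    Tendsto (fun x : ℝ ↦ x ^ N * Real.exp (-b * x ^ a)) atTop (𝓝 0) := by
  refine ((tendsto_rpow_mul_exp_neg_mul_atTop_nhds_zero (N / a) b hb).comp
    (tendsto_rpow_atTop ha)).congr' ?_
  filter_upwards [eventually_ge_atTop 0] with x hx
  simp only [Function.comp_apply, ← Real.rpow_mul hx, mul_div_cancel₀ N ha.ne']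

theorem integrableOn_pow_mul_exp_neg_mul {c : ℝ} (hc : 0 < c) (n : ℕ) :
    IntegrableOn (fun y : ℝ ↦ y ^ n * Real.exp (-(c * y))) (Ioi 0) := by
  simpa using integrableOn_rpow_mul_exp_neg_mul_rpow (s := n)
    (neg_one_lt_zero.trans_le n.cast_nonneg) one_pos hc

theorem integral_pow_mul_exp_neg_mul {c : ℝ} (hc : 0 < c) (n : ℕ) :
    ∫ y in Ioi (0 : ℝ), y ^ n * Real.exp (-(c * y)) = n.factorial / c ^ (n + 1) := by
  have h := Real.integral_rpow_mul_exp_neg_mul_Ioi (a := n + 1) n.cast_add_one_pos hc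
  simp only [add_sub_cancel_right, Real.rpow_natCast] at h
  rw [h, Real.Gamma_nat_eq_factorial, ← Nat.cast_add_one, Real.rpow_natCast, one_div_pow,
    one_div_mul_eq_div]

theorem integrableOn_quadratic_mul_exp_neg_mul {c : ℝ} (hc : 0 < c) (α β γ : ℝ) :
    IntegrableOn (fun y : ℝ ↦ (α + β * y + γ * y ^ 2) * Real.exp (-(c * y))) (Ioi 0) := by
  have h (n : ℕ) := integrableOn_pow_mul_exp_neg_mul hc n
  refine ((((h 0).const_mul α).add ((h 1).const_mul β)).add ((h 2).const_mul γ)).congr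
    (ae_of_all _ fun y ↦ ?_)
  simp only [Pi.add_apply]
  ring

theorem integral_quadratic_mul_exp_neg_mul {c : ℝ} (hc : 0 < c) (α β γ : ℝ) :
    ∫ y in Ioi (0 : ℝ), (α + β * y + γ * y ^ 2) * Real.exp (-(c * y)) =
      α / c + β / c ^ 2 + 2 * γ / c ^ 3 := by
  have h (n : ℕ) := integrableOn_pow_mul_exp_neg_mul hc n
  have hlinear : IntegrableOn (fun y : ℝ ↦
      α * (y ^ 0 * Real.exp (-(c * y))) + β * (y ^ 1 * Real.exp (-(c * y)))) (Ioi 0) :=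
    ((h 0).const_mul α).add ((h 1).const_mul β)
  calc ∫ y in Ioi (0 : ℝ), (α + β * y + γ * y ^ 2) * Real.exp (-(c * y))
      = ∫ y in Ioi (0 : ℝ), (α * (y ^ 0 * Real.exp (-(c * y)))
          + β * (y ^ 1 * Real.exp (-(c * y)))) + γ * (y ^ 2 * Real.exp (-(c * y))) := by
        congr with y
        ring
    _ = _ := by
        rw [integral_add hlinear ((h 2).const_mul γ),
          integral_add ((h 0).const_mul α) ((h 1).const_mul β)]
        simp only [integral_const_mul, integral_pow_mul_exp_neg_mul hc]
        norm_num [Nat.factorial]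
        ring

/-! ### Lower bounds for the Gamma function -/

theorem tangent_le_of_convexOn {f : ℝ → ℝ} {S : Set ℝ} (hf : ConvexOn ℝ S f) {x y d : ℝ}
    (hx : x ∈ S) (hy : y ∈ S) (hd : HasDerivAt f d x) : f x + d * (y - x) ≤ f y := by
  rcases lt_trichotomy x y with h | rfl | h
  · have := hf.le_slope_of_hasDerivAt hx hy h hd
    rw [slope_def_field, le_div_iff₀ (by linarith)] at this
    linarith
  · simp
  · have := hf.slope_le_of_hasDerivAt hy hx h hd
    rw [slope_def_field, div_le_iff₀ (by linarith)] at this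
    linarith

theorem one_sub_le_Gamma {x : ℝ} (hx : 0 < x) :
    1 - Real.eulerMascheroniConstant * (x - 1) ≤ Real.Gamma x := by
  have := tangent_le_of_convexOn Real.convexOn_Gamma (mem_Ioi.mpr one_pos) hx
    Real.hasDerivAt_Gamma_one
  rw [Real.Gamma_one] at this
  linarith

theorem one_add_le_Gamma {x : ℝ} (hx : 0 < x) :
    1 + (1 - Real.eulerMascheroniConstant) * (x - 2) ≤ Real.Gamma x := by
  have hderiv := Real.hasDerivAt_Gamma_nat 1
  norm_num at hderiv
  have := tangent_le_of_convexOn Real.convexOn_Gamma (mem_Ioi.mpr two_pos) hx hderiv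
  rw [Real.Gamma_two] at this
  linarith

theorem Gamma_three_halves : Real.Gamma (3 / 2) = √π / 2 := by
  rw [show (3 / 2 : ℝ) = 1 / 2 + 1 by norm_num, Real.Gamma_add_one (by norm_num),
    Real.Gamma_one_half_eq]
  ring

theorem hasDerivAt_Gamma_three_halves : HasDerivAt Real.Gamma
    (√π / 2 * (2 - 2 * Real.log 2 - Real.eulerMascheroniConstant)) (3 / 2) := by
  have hshift : HasDerivAt (fun y : ℝ ↦ Real.Gamma (y - 1))
      (-√π * (Real.eulerMascheroniConstant + 2 * Real.log 2)) (3 / 2) :=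
    HasDerivAt.comp_sub_const (3 / 2) 1 (by
      rw [show (3 / 2 - 1 : ℝ) = 1 / 2 by norm_num]
      exact Real.hasDerivAt_Gamma_one_half)
  have hrec : Real.Gamma =ᶠ[𝓝 (3 / 2)] fun y ↦ (y - 1) * Real.Gamma (y - 1) := by
    filter_upwards [lt_mem_nhds (show (1 : ℝ) < 3 / 2 by norm_num)] with y hy
    rw [← Real.Gamma_add_one (by linarith), sub_add_cancel]
  refine ((((hasDerivAt_id _).sub_const 1).mul hshift).congr_of_eventuallyEq hrec).congr_deriv ?_
  rw [show (3 / 2 - 1 : ℝ) = 1 / 2 by norm_num, Real.Gamma_one_half_eq]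
  ring

theorem tangent_three_halves_le_Gamma {x : ℝ} (hx : 0 < x) :
    √π / 2 * (1 + (2 - 2 * Real.log 2 - Real.eulerMascheroniConstant) * (x - 3 / 2)) ≤
      Real.Gamma x := by
  have := tangent_le_of_convexOn Real.convexOn_Gamma (by norm_num [mem_Ioi]) hx
    hasDerivAt_Gamma_three_halves
  rw [Gamma_three_halves] at this
  linarith

theorem one_le_Gamma_of_le_one {x : ℝ} (hx0 : 0 < x) (hx1 : x ≤ 1) : 1 ≤ Real.Gamma x := by
  have := mul_nonneg (one_half_pos.trans Real.one_half_lt_eulerMascheroniConstant).le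
    (sub_nonneg.mpr hx1)
  linarith [one_sub_le_Gamma hx0]

theorem half_le_Gamma_of_le_two {x : ℝ} (hx0 : 0 < x) (hx2 : x ≤ 2) : x / 2 ≤ Real.Gamma x := by
  have := mul_nonneg (sub_nonneg.mpr Real.one_half_lt_eulerMascheroniConstant.le)
    (sub_nonneg.mpr hx2)
  linarith [one_add_le_Gamma hx0]

theorem one_add_sub_two_div_three_le_Gamma {x : ℝ} (hx : 2 ≤ x) :
    1 + (x - 2) / 3 ≤ Real.Gamma x := by
  have := mul_nonneg (sub_nonneg.mpr Real.eulerMascheroniConstant_lt_two_thirds.le)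
    (sub_nonneg.mpr hx)
  linarith [one_add_le_Gamma (two_pos.trans_le hx)]

theorem Gamma_ge_d3 {x : ℝ} (hx : 0 < x) : 0.855 ≤ Real.Gamma x := by
  have hγ_gt := Real.one_half_lt_eulerMascheroniConstant
  have hγ_lt := Real.eulerMascheroniConstant_lt_two_thirds
  rcases le_total x 1.2175 with h | h
  · nlinarith [one_sub_le_Gamma hx]
  rcases le_total 2 x with h2 | h2
  · linarith [one_add_sub_two_div_three_le_Gamma h2]
  have hsqrt : 0.886 ≤ √π / 2 := by
    have : 1.772 ≤ √π := Real.le_sqrt_of_sq_le (by linarith [Real.pi_gt_d4])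
    linarith
  have hdigamma : -0.0322 ≤ (2 - 2 * Real.log 2 - Real.eulerMascheroniConstant) * (x - 3 / 2) := by
    have hlower : -0.0531 ≤ 2 - 2 * Real.log 2 - Real.eulerMascheroniConstant := by
      linarith [Real.log_two_lt_d9]
    have hupper : 2 - 2 * Real.log 2 - Real.eulerMascheroniConstant ≤ 0.1138 := by
      linarith [Real.log_two_gt_d9]
    rcases le_total x (3 / 2) with hle | hge
    · linarith [mul_le_mul_of_nonpos_right hupper (sub_nonpos.mpr hle)]
    · linarith [mul_le_mul_of_nonneg_right hlower (sub_nonneg.mpr hge)]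
  refine le_trans ?_ (tangent_three_halves_le_Gamma hx)
  nlinarith

theorem mul_sub_one_le_Gamma {x : ℝ} (hx : 1 < x) : 0.855 * (x - 1) ≤ Real.Gamma x := by
  have hx' : 0 < x - 1 := by linarith
  calc 0.855 * (x - 1) = (x - 1) * 0.855 := mul_comm _ _
    _ ≤ (x - 1) * Real.Gamma (x - 1) := by
        gcongr
        exact Gamma_ge_d3 hx'
    _ = Real.Gamma x := by rw [← Real.Gamma_add_one hx'.ne', sub_add_cancel]

-- The square makes AM-GM applicable to the product `(s + 1.09) * (h + 2)` when `x = s + h`.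
theorem sq_le_Gamma {x : ℝ} (hx0 : 0 < x) (hx4 : x ≤ 4) :
    0.037 * (x + 3.09) ^ 2 ≤ Real.Gamma x := by
  rcases le_total x 1.71 with h | h
  · nlinarith [Gamma_ge_d3 hx0]
  rcases le_total x 2 with h2 | h2
  · nlinarith [half_le_Gamma_of_le_two hx0 h2]
  rcases le_total x 2.5 with h3 | h3
  · nlinarith [one_add_sub_two_div_three_le_Gamma h2]
  · nlinarith [mul_sub_one_le_Gamma (by linarith : 1 < x)]

theorem Gamma_mul_le_Gamma_add {s h : ℝ} (hs : 3 ≤ s) (hh : 0 ≤ h) :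
    Real.Gamma s * (1 + h / 2) ≤ Real.Gamma (s + h) := by
  rcases hh.eq_or_lt with rfl | hh
  · simp
  have hslope := Real.convexOn_Gamma.slope_mono_adjacent (x := s - 1) (y := s) (z := s + h)
    (mem_Ioi.mpr (by linarith)) (mem_Ioi.mpr (by linarith)) (by linarith) (by linarith)
  rw [sub_sub_cancel, div_one, add_sub_cancel_left, le_div_iff₀ hh] at hslope
  have hrec : Real.Gamma s = (s - 1) * Real.Gamma (s - 1) := by
    rw [← Real.Gamma_add_one (by linarith), sub_add_cancel]
  have hhalf : Real.Gamma (s - 1) ≤ Real.Gamma s / 2 := by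
    have hpos : 0 < Real.Gamma (s - 1) := Real.Gamma_pos_of_pos (by linarith)
    rw [hrec]
    nlinarith
  calc Real.Gamma s * (1 + h / 2) = Real.Gamma s + (Real.Gamma s - Real.Gamma s / 2) * h := by ring
    _ ≤ Real.Gamma s + (Real.Gamma s - Real.Gamma (s - 1)) * h := by gcongr
    _ ≤ Real.Gamma (s + h) := by linarith

/-! ### The tail of the oscillatory integral -/

/-- The integrand `t ^ (s - 1) * e^{-t ^ a} * e^{it}` continued analytically to `0 < re z`. -/
noncomputable def oscKernel (a s : ℝ) (z : ℂ) : ℂ :=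
  z ^ ((s - 1 : ℝ) : ℂ) * Complex.exp (-z ^ (a : ℂ)) * Complex.exp (Complex.I * z)

theorem norm_oscKernel_le {a : ℝ} {z : ℂ} (ha0 : 0 ≤ a) (ha1 : a ≤ 1) (s : ℝ) (hz : 0 < z.re) :
    ‖oscKernel a s z‖ ≤ ‖z‖ ^ (s - 1) * Real.exp (-z.re ^ a - z.im) := by
  have hz0 : z ≠ 0 := by rintro rfl; simp at hz
  rw [oscKernel, norm_mul, norm_mul, Complex.norm_cpow_real,
    Complex.norm_exp, Complex.norm_exp, mul_assoc, ← Real.exp_add]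
  gcongr
  have := re_rpow_le_re_cpow ha0 ha1 hz
  simp only [Complex.neg_re, Complex.mul_re, Complex.I_re, Complex.I_im]
  linarith

theorem differentiableOn_oscKernel (a s : ℝ) :
    DifferentiableOn ℂ (oscKernel a s) {z | 0 < z.re} := by
  intro z hz
  have hslit : z ∈ Complex.slitPlane := Or.inl hz
  unfold oscKernel
  fun_prop (disch := assumption)

theorem oscKernel_ofReal {t : ℝ} (ht : 0 ≤ t) (a s : ℝ) :
    oscKernel a s t =
      (t ^ (s - 1) * Real.exp (-t ^ a) : ℝ) * Complex.exp (t * Complex.I) := by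
  rw [oscKernel, ← Complex.ofReal_cpow ht, ← Complex.ofReal_cpow ht, mul_comm Complex.I]
  push_cast
  rfl

theorem oscKernel_ofReal_im {t : ℝ} (ht : 0 ≤ t) (a s : ℝ) :
    (oscKernel a s t).im = t ^ (s - 1) * Real.exp (-t ^ a) * Real.sin t := by
  rw [oscKernel_ofReal ht, Complex.im_ofReal_mul, Complex.exp_ofReal_mul_I_im]

theorem integrableOn_oscKernel_ofReal {a s : ℝ} (ha : 0 < a) (hs : 0 < s) :
    IntegrableOn (fun t : ℝ ↦ oscKernel a s t) (Ioi 0) := by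
  have hreal : IntegrableOn (fun t : ℝ ↦ t ^ (s - 1) * Real.exp (-t ^ a)) (Ioi 0) :=
    integrableOn_rpow_mul_exp_neg_rpow (by linarith) ha
  refine IntegrableOn.congr_fun (f := fun t : ℝ ↦
      ((t ^ (s - 1) * Real.exp (-t ^ a) : ℝ) : ℂ) * Complex.exp (t * Complex.I)) ?_
    (fun t ht ↦ (oscKernel_ofReal (le_of_lt ht) a s).symm) measurableSet_Ioi
  exact hreal.ofReal.mul_bdd (c := 1) (by fun_prop)
    (ae_of_all _ fun t ↦ (Complex.norm_exp_ofReal_mul_I t).le)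

theorem norm_oscKernel_le_of_mem_segment {a : ℝ} (s : ℝ) (ha0 : 0 ≤ a) (ha1 : a ≤ 1) {d : ℂ}
    (hre : 0 ≤ d.re) (him : 0 ≤ d.im) {R : ℝ} (hR : 2 ≤ R) {z : ℂ}
    (hz : z ∈ segment ℝ (1 + R * (1 : ℂ)) (1 + R * d)) :
    ‖oscKernel a s z‖ ≤ ((2 + ‖d‖) * R) ^ |s - 1| * Real.exp (-min 1 d.im * (R / 2) ^ a) := by
  obtain ⟨τ, ⟨hτ0, hτ1⟩, hτz⟩ := (segment_eq_image ℝ _ _).le hz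
  have hz_eq : z = 1 + R * ((1 - τ : ℝ) + τ * d) := by
    rw [← hτz]
    simp only [Complex.real_smul]
    push_cast
    ring
  have hz_re : z.re = 1 + R * (1 - τ) + R * τ * d.re := by simp [hz_eq]; ring
  have hz_im : z.im = R * τ * d.im := by simp [hz_eq]; ring
  have hτ' : 0 ≤ 1 - τ := by linarith
  have hone_re : 1 ≤ z.re := by
    have : 0 ≤ R * (1 - τ) + R * τ * d.re := by positivity
    linarith
  have hnorm_le : ‖z‖ ≤ (2 + ‖d‖) * R := by
    calc ‖z‖ ≤ 1 + R * ((1 - τ) + τ * ‖d‖) := by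
          rw [hz_eq]
          refine (norm_add_le _ _).trans ?_
          rw [norm_one, norm_mul, Complex.norm_of_nonneg (by linarith)]
          gcongr
          refine (norm_add_le _ _).trans ?_
          rw [norm_mul, Complex.norm_of_nonneg hτ', Complex.norm_of_nonneg hτ0]
      _ ≤ 1 + R * (1 + 1 * ‖d‖) := by
          gcongr
          linarith
      _ ≤ (2 + ‖d‖) * R := by linarith
  refine (norm_oscKernel_le ha0 ha1 s (by linarith)).trans ?_
  gcongr ?_ * Real.exp ?_
  · exact (Real.rpow_le_rpow_of_exponent_le (hone_re.trans (Complex.re_le_norm z))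
      (le_abs_self _)).trans (Real.rpow_le_rpow (norm_nonneg z) hnorm_le (abs_nonneg _))
  · rw [hz_re, hz_im]
    linarith [min_mul_rpow_le_rpow_add ha0 ha1 hre him hτ0 hτ1 hR]

theorem exists_oscKernel_segment_majorant {a : ℝ} (s : ℝ) (ha0 : 0 < a) (ha1 : a ≤ 1) {d : ℂ}
    (hre : 0 ≤ d.re) (him : 0 < d.im) :
    ∃ M : ℝ → ℝ, (∀ᶠ R : ℝ in atTop, ∀ z ∈ segment ℝ (1 + R * (1 : ℂ)) (1 + R * d),
      ‖oscKernel a s z‖ ≤ M R) ∧ Tendsto (fun R ↦ R * M R) atTop (𝓝 0) := by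
  refine ⟨fun R ↦ ((2 + ‖d‖) * R) ^ |s - 1| * Real.exp (-min 1 d.im * (R / 2) ^ a), ?_, ?_⟩
  · filter_upwards [eventually_ge_atTop 2] with R hR z hz
    exact norm_oscKernel_le_of_mem_segment s ha0.le ha1 hre him.le hR hz
  · have hlim := ((tendsto_rpow_mul_exp_neg_rpow_atTop ha0 (lt_min one_pos him)
      (|s - 1| + 1)).comp (tendsto_id.atTop_div_const two_pos)).const_mul
        (2 * (2 * (2 + ‖d‖)) ^ |s - 1|)
    rw [mul_zero] at hlim
    refine hlim.congr' ?_
    filter_upwards [eventually_gt_atTop 0] with R hR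
    rw [show (2 + ‖d‖) * R = 2 * (2 + ‖d‖) * (R / 2) by ring,
      Real.mul_rpow (x := 2 * (2 + ‖d‖)) (y := R / 2) (by positivity) (by positivity)]
    simp only [Function.comp_apply, id_eq]
    rw [Real.rpow_add_one (by positivity)]
    ring

theorem one_add_mul_re_pos {d : ℂ} (hd : 0 ≤ d.re) {y : ℝ} (hy : 0 ≤ y) :
    0 < (1 + y * d).re := by
  have := mul_nonneg hy hd
  rw [Complex.add_re, Complex.re_ofReal_mul, Complex.one_re]
  linarith

theorem norm_integral_oscKernel_le_of_ray {a s : ℝ} (ha0 : 0 < a) (ha1 : a ≤ 1) (hs : 0 < s)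
    {d : ℂ} (hre : 0 ≤ d.re) (him : 0 < d.im) {g : ℝ → ℝ} (hg : IntegrableOn g (Ioi 0))
    (hle : ∀ y : ℝ, 0 < y →
      ‖1 + y * d‖ ^ (s - 1) * Real.exp (-(1 + y * d.re) ^ a - y * d.im) ≤ g y) :
    ‖∫ t in Ioi (1 : ℝ), oscKernel a s t‖ ≤ ‖d‖ * ∫ y in Ioi 0, g y := by
  have hray_le : ∀ᵐ y : ℝ ∂volume.restrict (Ioi 0), ‖oscKernel a s (1 + y * d)‖ ≤ g y := by
    filter_upwards [ae_restrict_mem measurableSet_Ioi] with y hy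
    refine (norm_oscKernel_le ha0.le ha1 s (one_add_mul_re_pos hre (le_of_lt hy))).trans ?_
    simpa using hle y hy
  have hray : IntegrableOn (fun y : ℝ ↦ oscKernel a s (1 + y * d)) (Ioi 0) := by
    refine hg.mono' (ContinuousOn.aestronglyMeasurable ?_ measurableSet_Ioi) hray_le
    exact (differentiableOn_oscKernel a s).continuousOn.comp (by fun_prop)
      fun y hy ↦ one_add_mul_re_pos hre (le_of_lt hy)
  have hreal : IntegrableOn (fun y : ℝ ↦ oscKernel a s (1 + y * 1)) (Ioi 0) := by
    have htail := (integrableOn_oscKernel_ofReal ha0 hs).mono_set (Ioi_subset_Ioi zero_le_one)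
    rw [← add_zero 1, ← integrableOn_Ioi_comp_const_add] at htail
    simpa using htail
  obtain ⟨M, hM, hM0⟩ := exists_oscKernel_segment_majorant s ha0 ha1 hre him
  have hrotate := integral_ray_eq_integral_ray
    (isOpen_lt continuous_const Complex.continuous_re) (convex_halfSpace_re_gt 0)
    (differentiableOn_oscKernel a s) (fun y hy ↦ one_add_mul_re_pos (by simp) hy)
    (fun y hy ↦ one_add_mul_re_pos hre hy) hreal hray hM hM0
  calc ‖∫ t in Ioi (1 : ℝ), oscKernel a s t‖
      = ‖d * ∫ y : ℝ in Ioi 0, oscKernel a s (1 + y * d)‖ := by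
        rw [← hrotate]
        simpa using congrArg norm
          (integral_Ioi_comp_const_add (fun t : ℝ ↦ oscKernel a s t) 1 0).symm
    _ ≤ ‖d‖ * ∫ y in Ioi 0, g y := by
        rw [norm_mul]
        gcongr
        exact norm_integral_le_of_norm_le hg hray_le

theorem norm_integral_oscKernel_le_mul_exp_neg_one {a s σ : ℝ} (ha0 : 0 < a) (ha1 : a ≤ 1)
    (hs : 0 < s) (hsσ : s ≤ σ) (hσ1 : 1 ≤ σ) (hσ3 : σ ≤ 3) :
    ‖∫ t in Ioi (1 : ℝ), oscKernel a s t‖ ≤ σ * Real.exp (-1) := by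
  have hmajorant (y : ℝ) (hy : 0 < y) :
      ‖1 + y * Complex.I‖ ^ (s - 1) * Real.exp (-(1 + y * Complex.I.re) ^ a - y * Complex.I.im) ≤
        Real.exp (-1) * ((1 + 0 * y + (σ - 1) / 2 * y ^ 2) * Real.exp (-(1 * y))) := by
    have hnorm : ‖1 + y * Complex.I‖ = (1 + y ^ 2) ^ (1 / 2 : ℝ) := by
      rw [← Real.sqrt_eq_rpow, ← Complex.ofReal_one, Complex.norm_add_mul_I, one_pow]
    have hpow : ‖1 + y * Complex.I‖ ^ (s - 1) ≤ 1 + (σ - 1) / 2 * y ^ 2 :=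
      calc ‖1 + y * Complex.I‖ ^ (s - 1) = (1 + y ^ 2) ^ ((s - 1) / 2) := by
            rw [hnorm, ← Real.rpow_mul (by positivity)]
            ring_nf
        _ ≤ (1 + y ^ 2) ^ ((σ - 1) / 2) := by
            gcongr
            linarith [sq_nonneg y]
        _ ≤ 1 + (σ - 1) / 2 * y ^ 2 :=
            rpow_one_add_le_one_add_mul_self (by linarith [sq_nonneg y]) (by linarith)
              (by linarith)
    have hexp : Real.exp (-(1 + y * Complex.I.re) ^ a - y * Complex.I.im) =
        Real.exp (-1) * Real.exp (-(1 * y)) := by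
      rw [← Real.exp_add]
      simp [sub_eq_add_neg]
    rw [hexp, mul_left_comm, zero_mul, add_zero]
    gcongr
  refine (norm_integral_oscKernel_le_of_ray ha0 ha1 hs (by simp) (by simp)
    ((integrableOn_quadratic_mul_exp_neg_mul one_pos _ _ _).const_mul _) hmajorant).trans_eq ?_
  rw [integral_const_mul, integral_quadratic_mul_exp_neg_mul one_pos, Complex.norm_I]
  ring

theorem norm_integral_oscKernel_le_integral {a s : ℝ} (ha0 : 0 < a) (ha1 : a ≤ 1) (hs : 1 ≤ s) :
    ‖∫ t in Ioi (1 : ℝ), oscKernel a s t‖ ≤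
      ∫ t in Ioi (1 : ℝ), Real.exp (-t) * t ^ (s - 1) := by
  have hgamma : IntegrableOn (fun y : ℝ ↦ Real.exp (-(1 + y)) * (1 + y) ^ (s - 1)) (Ioi 0) := by
    rw [integrableOn_Ioi_comp_const_add (f := fun t : ℝ ↦ Real.exp (-t) * t ^ (s - 1)), add_zero]
    exact (Real.GammaIntegral_convergent (zero_lt_one.trans_le hs)).mono_set
      (Ioi_subset_Ioi zero_le_one)
  have hmajorant (y : ℝ) (hy : 0 < y) :
      ‖1 + y * Complex.I‖ ^ (s - 1) * Real.exp (-(1 + y * Complex.I.re) ^ a - y * Complex.I.im) ≤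
        Real.exp (-(1 + y)) * (1 + y) ^ (s - 1) := by
    have hnorm : ‖1 + y * Complex.I‖ ≤ 1 + y := by
      refine (norm_add_le _ _).trans_eq ?_
      simp [abs_of_pos hy]
    rw [mul_comm, show -(1 + y * Complex.I.re) ^ a - y * Complex.I.im = -(1 + y) by simp; ring]
    gcongr
  have h := norm_integral_oscKernel_le_of_ray ha0 ha1 (zero_lt_one.trans_le hs) (by simp) (by simp)
    hgamma hmajorant
  rwa [Complex.norm_I, one_mul,
    integral_Ioi_comp_const_add (fun t ↦ Real.exp (-t) * t ^ (s - 1)), add_zero] at h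

-- The vertical ray would give `Real.exp (-1)`, which is too large for the case `k = 0`. The
-- direction `1 + 2 * I` costs a factor `√5` but makes `e^{-z ^ a}` decay at least like
-- `z.re ^ (-s)`.
theorem norm_integral_oscKernel_le_of_le {a s : ℝ} (ha1 : a ≤ 1) (hs : 0 < s) (hsa : s ≤ a) :
    ‖∫ t in Ioi (1 : ℝ), oscKernel a s t‖ ≤ 3 * √5 / 8 * Real.exp (-1) := by
  have hmajorant (y : ℝ) (hy : 0 < y) : ‖1 + y * (⟨1, 2⟩ : ℂ)‖ ^ (s - 1) *
      Real.exp (-(1 + y * (⟨1, 2⟩ : ℂ).re) ^ a - y * (⟨1, 2⟩ : ℂ).im) ≤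
        Real.exp (-1) * ((1 + -3 / 4 * y + 1 / 4 * y ^ 2) * Real.exp (-(2 * y))) := by
    have hnorm : ‖1 + y * (⟨1, 2⟩ : ℂ)‖ ^ (s - 1) ≤ (1 + y) ^ (s - 1) := by
      refine Real.rpow_le_rpow_of_nonpos (by linarith) ?_ (by linarith)
      simpa using Complex.re_le_norm (1 + y * (⟨1, 2⟩ : ℂ))
    have hexp : Real.exp (-(1 + y) ^ a) ≤ Real.exp (-1) * (1 + y) ^ (-s) :=
      exp_neg_rpow_le (by linarith) hsa
    have hinv : (1 + y)⁻¹ ≤ 1 + -3 / 4 * y + 1 / 4 * y ^ 2 := by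
      rw [inv_le_iff_one_le_mul₀ (by linarith)]
      -- `(1 + y) * (4 - 3 * y + y ^ 2) = 4 + y * (1 - y) ^ 2`
      linarith [mul_nonneg hy.le (sq_nonneg (1 - y))]
    calc ‖1 + y * (⟨1, 2⟩ : ℂ)‖ ^ (s - 1) * Real.exp (-(1 + y * 1) ^ a - y * 2)
        ≤ (1 + y) ^ (s - 1) * (Real.exp (-1) * (1 + y) ^ (-s) * Real.exp (-(2 * y))) := by
          rw [mul_one, mul_comm y 2, sub_eq_add_neg (-_), Real.exp_add]
          gcongr
      _ = Real.exp (-1) * ((1 + y)⁻¹ * Real.exp (-(2 * y))) := by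
          have : (1 + y) ^ (s - 1) * (1 + y) ^ (-s) = (1 + y)⁻¹ := by
            rw [← Real.rpow_add (by linarith), ← Real.rpow_neg_one]
            ring_nf
          rw [← this]
          ring
      _ ≤ _ := by gcongr
  refine (norm_integral_oscKernel_le_of_ray (hs.trans_le hsa) ha1 hs (by simp) (by simp)
    ((integrableOn_quadratic_mul_exp_neg_mul two_pos _ _ _).const_mul _) hmajorant).trans_eq ?_
  have hnorm : ‖(⟨1, 2⟩ : ℂ)‖ = √5 := by
    rw [Complex.norm_def, Complex.normSq_mk]
    norm_num
  rw [integral_const_mul, integral_quadratic_mul_exp_neg_mul two_pos, hnorm]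
  ring

/-! ### The head of the oscillatory integral -/

/-- An upper bound for the integral over `(0, 1]`: the moment of `t ^ (s - 1)` against the cubic
`t - t ^ 2 + t ^ 3 / 3`, which majorizes `e^{-t} * sin t`. -/
noncomputable def headBound (s : ℝ) : ℝ :=
  1 / (s + 1) - 1 / (s + 2) + 1 / (3 * (s + 3))

theorem headBound_eq_div {s : ℝ} (hs : 0 ≤ s) :
    headBound s = (s ^ 2 + 6 * s + 11) / (3 * (s + 1) * (s + 2) * (s + 3)) := by
  rw [headBound]
  field_simp
  ring

theorem headBound_le_of_le_two_thirds {s : ℝ} (hs0 : 0 ≤ s) (hs : s ≤ 2 / 3) :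
    headBound s ≤ 0.612 - 0.44 * s := by
  rw [headBound_eq_div hs0, div_le_iff₀ (by positivity)]
  nlinarith [mul_nonneg hs0 (sub_nonneg.mpr hs), mul_nonneg hs0 hs0, pow_nonneg hs0 3]

theorem headBound_le_of_mem_Icc_half_one {s : ℝ} (hs : s ∈ Icc (1 / 2 : ℝ) 1) :
    headBound s ≤ 0.474 - 0.223 * s := by
  obtain ⟨hs0, hs1⟩ := hs
  rw [headBound_eq_div (by linarith), div_le_iff₀ (by positivity)]
  nlinarith [mul_nonneg (sub_nonneg.mpr hs0) (sub_nonneg.mpr hs1)]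

theorem headBound_le_of_mem_Icc_one_three {s : ℝ} (hs : s ∈ Icc (1 : ℝ) 3) :
    headBound s ≤ 29 / 90 - 13 / 180 * s := by
  obtain ⟨hs1, hs3⟩ := hs
  rw [headBound_eq_div (by linarith), div_le_iff₀ (by positivity)]
  have : 0 ≤ (s - 1) * (3 - s) * (13 * s ^ 2 + 72 * s + 104) :=
    mul_nonneg (mul_nonneg (sub_nonneg.mpr hs1) (sub_nonneg.mpr hs3)) (by positivity)
  linarith

theorem norm_rpow_mul_exp_mul_sin_le {a t : ℝ} (s : ℝ) (ha1 : a ≤ 1) (ht : t ∈ Ioc (0 : ℝ) 1) :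
    ‖t ^ (s - 1) * Real.exp (-t ^ a) * Real.sin t‖ ≤
      t ^ (s - 1) * (Real.exp (-t) * Real.sin t) := by
  have hsin : 0 ≤ Real.sin t :=
    Real.sin_nonneg_of_nonneg_of_le_pi ht.1.le (ht.2.trans (by linarith [Real.pi_gt_three]))
  have hrpow : 0 ≤ t ^ (s - 1) := Real.rpow_nonneg ht.1.le _
  have hta : t ≤ t ^ a := Real.self_le_rpow_of_le_one ht.1.le ht.2 ha1
  rw [Real.norm_of_nonneg (by positivity), mul_assoc]
  gcongr

theorem rpow_sub_one_mul_cubic {t : ℝ} (ht : 0 < t) (s : ℝ) :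
    t ^ (s - 1) * (t - t ^ 2 + t ^ 3 / 3) = t ^ s - t ^ (s + 1) + 1 / 3 * t ^ (s + 2) := by
  have h0 : t ^ s = t ^ (s - 1) * t := by rw [← Real.rpow_add_one ht.ne', sub_add_cancel]
  have h2 : t ^ (s + 2) = t ^ s * t ^ 2 := by exact_mod_cast Real.rpow_add_natCast ht.ne' s 2
  rw [h2, Real.rpow_add_one ht.ne', h0]
  ring

theorem integrableOn_rpow_mul_cubic {s : ℝ} (hs : -1 < s) :
    IntegrableOn (fun t : ℝ ↦ t ^ (s - 1) * (t - t ^ 2 + t ^ 3 / 3)) (Ioc 0 1) := by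
  have hint {r : ℝ} (hr : -1 < r) : IntegrableOn (fun t : ℝ ↦ t ^ r) (Ioc 0 1) :=
    (intervalIntegral.intervalIntegrable_rpow' hr).1
  refine IntegrableOn.congr_fun ?_ (fun t ht ↦ (rpow_sub_one_mul_cubic ht.1 s).symm)
    measurableSet_Ioc
  exact ((hint hs).sub (hint (by linarith))).add ((hint (by linarith)).const_mul _)

theorem integral_rpow_mul_cubic {s : ℝ} (hs : -1 < s) :
    ∫ t in Ioc (0 : ℝ) 1, t ^ (s - 1) * (t - t ^ 2 + t ^ 3 / 3) = headBound s := by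
  have hint {r : ℝ} (hr : -1 < r) : IntervalIntegrable (fun t : ℝ ↦ t ^ r) volume 0 1 :=
    intervalIntegral.intervalIntegrable_rpow' hr
  have hmoment {r : ℝ} (hr : -1 < r) : ∫ t in (0 : ℝ)..1, t ^ r = 1 / (r + 1) := by
    rw [integral_rpow (Or.inl hr), Real.one_rpow, Real.zero_rpow (by linarith), sub_zero]
  have h1 : -1 < s + 1 := by linarith
  have h2 : -1 < s + 2 := by linarith
  rw [setIntegral_congr_fun measurableSet_Ioc fun t ht ↦ rpow_sub_one_mul_cubic ht.1 s,
    ← intervalIntegral.integral_of_le zero_le_one,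
    intervalIntegral.integral_add ((hint hs).sub (hint h1)) ((hint h2).const_mul _),
    intervalIntegral.integral_sub (hint hs) (hint h1), intervalIntegral.integral_const_mul,
    hmoment hs, hmoment h1, hmoment h2, headBound, add_assoc, add_assoc, one_div_mul_one_div]
  norm_num

theorem abs_integral_Ioc_le_headBound {a s : ℝ} (ha1 : a ≤ 1) (hs : -1 < s) :
    |∫ t in Ioc (0 : ℝ) 1, t ^ (s - 1) * Real.exp (-t ^ a) * Real.sin t| ≤ headBound s := by
  rw [← Real.norm_eq_abs, ← integral_rpow_mul_cubic hs]
  refine norm_integral_le_of_norm_le (integrableOn_rpow_mul_cubic hs) ?_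
  filter_upwards [ae_restrict_mem measurableSet_Ioc] with t ht
  exact (norm_rpow_mul_exp_mul_sin_le s ha1 ht).trans
    (mul_le_mul_of_nonneg_left (exp_neg_mul_sin_le ht.1.le) (Real.rpow_nonneg ht.1.le _))

theorem abs_integral_Ioc_le_integral {a s : ℝ} (ha1 : a ≤ 1) (hs : 0 < s) :
    |∫ t in Ioc (0 : ℝ) 1, t ^ (s - 1) * Real.exp (-t ^ a) * Real.sin t| ≤
      ∫ t in Ioc (0 : ℝ) 1, Real.exp (-t) * t ^ (s - 1) := by
  rw [← Real.norm_eq_abs]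
  refine norm_integral_le_of_norm_le
    ((Real.GammaIntegral_convergent hs).mono_set Ioc_subset_Ioi_self) ?_
  filter_upwards [ae_restrict_mem measurableSet_Ioc] with t ht
  have hrpow : 0 ≤ t ^ (s - 1) := Real.rpow_nonneg ht.1.le _
  calc ‖t ^ (s - 1) * Real.exp (-t ^ a) * Real.sin t‖
      ≤ t ^ (s - 1) * (Real.exp (-t) * Real.sin t) := norm_rpow_mul_exp_mul_sin_le s ha1 ht
    _ ≤ t ^ (s - 1) * (Real.exp (-t) * 1) := by
        gcongr
        exact Real.sin_le_one t
    _ = Real.exp (-t) * t ^ (s - 1) := by ring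

/-! ### The moments -/

/-- The half-line integral into which the substitution `t = r ^ (2 * q)` turns the moments,
with `a = p / q` and `s = (k + 1) / q`. -/
noncomputable def oscIntegral (a s : ℝ) : ℝ :=
  ∫ t in Ioi (0 : ℝ), t ^ (s - 1) * Real.exp (-t ^ a) * Real.sin t

theorem oscIntegral_eq_add {a s : ℝ} (ha : 0 < a) (hs : 0 < s) :
    oscIntegral a s = (∫ t in Ioc (0 : ℝ) 1, t ^ (s - 1) * Real.exp (-t ^ a) * Real.sin t) +
      (∫ t in Ioi (1 : ℝ), oscKernel a s t).im := by
  have hint := integrableOn_oscKernel_ofReal ha hs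
  have htail := hint.mono_set (Ioi_subset_Ioi zero_le_one)
  calc oscIntegral a s = ∫ t in Ioi (0 : ℝ), (oscKernel a s t).im :=
        setIntegral_congr_fun measurableSet_Ioi
          fun t ht ↦ (oscKernel_ofReal_im (le_of_lt ht) a s).symm
    _ = (∫ t in Ioc (0 : ℝ) 1, (oscKernel a s t).im) +
          ∫ t in Ioi (1 : ℝ), (oscKernel a s t).im := by
        rw [← Ioc_union_Ioi_eq_Ioi zero_le_one]
        exact setIntegral_union (Ioc_disjoint_Ioi le_rfl) measurableSet_Ioi
          (hint.mono_set Ioc_subset_Ioi_self).im htail.im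
    _ = _ := by
        congr 1
        · exact setIntegral_congr_fun measurableSet_Ioc
            fun t ht ↦ oscKernel_ofReal_im ht.1.le a s
        · exact integral_im htail

theorem abs_oscIntegral_le_of_le {a s : ℝ} (ha1 : a ≤ 1) (hs : 0 < s) (hsa : s ≤ a) :
    |oscIntegral a s| ≤ headBound s + 3 * √5 / 8 * Real.exp (-1) := by
  rw [oscIntegral_eq_add (hs.trans_le hsa) hs]
  exact (abs_add_le _ _).trans (add_le_add (abs_integral_Ioc_le_headBound ha1 (by linarith))
    ((Complex.abs_im_le_norm _).trans (norm_integral_oscKernel_le_of_le ha1 hs hsa)))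

theorem abs_oscIntegral_le_headBound_add {a s σ : ℝ} (ha0 : 0 < a) (ha1 : a ≤ 1) (hs : 0 < s)
    (hsσ : s ≤ σ) (hσ1 : 1 ≤ σ) (hσ3 : σ ≤ 3) :
    |oscIntegral a s| ≤ headBound s + σ * Real.exp (-1) := by
  rw [oscIntegral_eq_add ha0 hs]
  exact (abs_add_le _ _).trans (add_le_add (abs_integral_Ioc_le_headBound ha1 (by linarith))
    ((Complex.abs_im_le_norm _).trans
      (norm_integral_oscKernel_le_mul_exp_neg_one ha0 ha1 hs hsσ hσ1 hσ3)))

theorem abs_oscIntegral_le_Gamma {a s : ℝ} (ha0 : 0 < a) (ha1 : a ≤ 1) (hs : 1 ≤ s) :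
    |oscIntegral a s| ≤ Real.Gamma s := by
  have hs0 : 0 < s := zero_lt_one.trans_le hs
  have hgamma := Real.GammaIntegral_convergent hs0
  rw [oscIntegral_eq_add ha0 hs0, Real.Gamma_eq_integral hs0, ← Ioc_union_Ioi_eq_Ioi zero_le_one,
    setIntegral_union (Ioc_disjoint_Ioi le_rfl) measurableSet_Ioi
      (hgamma.mono_set Ioc_subset_Ioi_self) (hgamma.mono_set (Ioi_subset_Ioi zero_le_one))]
  exact (abs_add_le _ _).trans (add_le_add (abs_integral_Ioc_le_integral ha1 hs0)
    ((Complex.abs_im_le_norm _).trans (norm_integral_oscKernel_le_integral ha0 ha1 hs)))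

theorem three_mul_sqrt_five_div_eight_mul_exp_neg_one_le :
    3 * √5 / 8 * Real.exp (-1) ≤ 0.3087 := by
  have hsqrt : √5 ≤ 2.2365 := Real.sqrt_le_iff.mpr (by norm_num)
  calc 3 * √5 / 8 * Real.exp (-1) ≤ 3 * 2.2365 / 8 * 0.36788 := by
        gcongr
        linarith [Real.exp_neg_one_lt_d9]
    _ ≤ 0.3087 := by norm_num

theorem abs_oscIntegral_mul_le_Gamma_add_self {a h : ℝ} (ha1 : a ≤ 1) (hh : 0 < h) (hha : h ≤ a) :
    |oscIntegral a h| * (1 + h / 2) ≤ Real.Gamma (h + h) := by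
  have hosc : |oscIntegral a h| ≤ headBound h + 0.3087 := by
    linarith [abs_oscIntegral_le_of_le ha1 hh hha,
      three_mul_sqrt_five_div_eight_mul_exp_neg_one_le]
  rcases le_total h (1 / 2) with hle | hge
  · calc |oscIntegral a h| * (1 + h / 2) ≤ (0.9207 - 0.44 * h) * (1 + h / 2) := by
          gcongr
          linarith [headBound_le_of_le_two_thirds hh.le (by linarith)]
      _ ≤ 1 := by nlinarith
      _ ≤ Real.Gamma (h + h) := one_le_Gamma_of_le_one (by linarith) (by linarith)
  · calc |oscIntegral a h| * (1 + h / 2) ≤ (0.7827 - 0.223 * h) * (1 + h / 2) := by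
          gcongr
          linarith [headBound_le_of_mem_Icc_half_one ⟨hge, hha.trans ha1⟩]
      _ ≤ 0.855 := by nlinarith [sq_nonneg (h - 3 / 4)]
      _ ≤ Real.Gamma (h + h) := Gamma_ge_d3 (by linarith)

theorem abs_oscIntegral_mul_le_Gamma_of_le_one {a s h : ℝ} (ha0 : 0 < a) (ha1 : a ≤ 1)
    (hs0 : 0 < s) (hs1 : s ≤ 1) (hh : 0 ≤ h) (hhs : h ≤ s / 2) :
    |oscIntegral a s| * (1 + h / 2) ≤ Real.Gamma (s + h) := by
  have hosc : |oscIntegral a s| ≤ headBound s + 0.36788 := by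
    linarith [abs_oscIntegral_le_headBound_add ha0 ha1 hs0 hs1 le_rfl (by norm_num),
      Real.exp_neg_one_lt_d9]
  have hfactor : 1 + h / 2 ≤ 1 + s / 4 := by linarith
  rcases le_total s (2 / 3) with hle | hge
  · calc |oscIntegral a s| * (1 + h / 2) ≤ (0.97988 - 0.44 * s) * (1 + s / 4) := by
          gcongr
          · linarith
          · linarith [headBound_le_of_le_two_thirds hs0.le hle]
      _ ≤ 1 := by nlinarith
      _ ≤ Real.Gamma (s + h) := one_le_Gamma_of_le_one (by linarith) (by linarith)
  · calc |oscIntegral a s| * (1 + h / 2) ≤ (0.84188 - 0.223 * s) * (1 + s / 4) := by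
          gcongr
          · linarith
          · linarith [headBound_le_of_mem_Icc_half_one ⟨by linarith, hs1⟩]
      _ ≤ 0.855 := by nlinarith
      _ ≤ Real.Gamma (s + h) := Gamma_ge_d3 (by linarith)

theorem abs_oscIntegral_mul_le_Gamma_of_le_three {a s h : ℝ} (ha0 : 0 < a) (ha1 : a ≤ 1)
    (hs1 : 1 ≤ s) (hs3 : s ≤ 3) (hh0 : 0 ≤ h) (hh1 : h ≤ 1) :
    |oscIntegral a s| * (1 + h / 2) ≤ Real.Gamma (s + h) := by
  have hs0 : 0 < s := zero_lt_one.trans_le hs1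
  have hexp : s * Real.exp (-1) ≤ s * 0.36788 := by
    gcongr
    linarith [Real.exp_neg_one_lt_d9]
  calc |oscIntegral a s| * (1 + h / 2) ≤ 0.296 * (s + 1.09) * (1 + h / 2) := by
        gcongr
        linarith [abs_oscIntegral_le_headBound_add ha0 ha1 hs0 le_rfl hs1 hs3,
          headBound_le_of_mem_Icc_one_three ⟨hs1, hs3⟩]
    _ = 0.037 * (4 * (s + 1.09) * (h + 2)) := by ring
    _ ≤ 0.037 * (s + 1.09 + (h + 2)) ^ 2 := by
        gcongr
        exact four_mul_le_sq_add _ _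
    _ = 0.037 * (s + h + 3.09) ^ 2 := by ring
    _ ≤ Real.Gamma (s + h) := sq_le_Gamma (by linarith) (by linarith)

theorem abs_oscIntegral_mul_le_Gamma_of_three_le {a s h : ℝ} (ha0 : 0 < a) (ha1 : a ≤ 1)
    (hs : 3 ≤ s) (hh : 0 ≤ h) : |oscIntegral a s| * (1 + h / 2) ≤ Real.Gamma (s + h) :=
  calc |oscIntegral a s| * (1 + h / 2) ≤ Real.Gamma s * (1 + h / 2) := by
        gcongr
        exact abs_oscIntegral_le_Gamma ha0 ha1 (by linarith)
    _ ≤ Real.Gamma (s + h) := Gamma_mul_le_Gamma_add hs hh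

theorem abs_oscIntegral_natCast_add_one_mul_le_Gamma {a h : ℝ} (ha1 : a ≤ 1) (hh0 : 0 < h)
    (hha : h ≤ a) (k : ℕ) :
    |oscIntegral a ((k + 1) * h)| * (1 + h / 2) ≤ Real.Gamma ((k + 1) * h + h) := by
  have ha0 : 0 < a := hh0.trans_le hha
  rcases k.eq_zero_or_pos with rfl | hk
  · simpa using abs_oscIntegral_mul_le_Gamma_add_self ha1 hh0 hha
  have hhs : h ≤ (k + 1) * h / 2 := by
    have : (1 : ℝ) * h ≤ k * h := by
      gcongr
      exact_mod_cast hk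
    linarith
  rcases le_total ((k + 1) * h) 1 with h1 | h1
  · exact abs_oscIntegral_mul_le_Gamma_of_le_one ha0 ha1 (by positivity) h1 hh0.le hhs
  rcases le_total ((k + 1) * h) 3 with h3 | h3
  · exact abs_oscIntegral_mul_le_Gamma_of_le_three ha0 ha1 h1 h3 hh0.le (hha.trans ha1)
  · exact abs_oscIntegral_mul_le_Gamma_of_three_le ha0 ha1 h3 hh0.le

theorem integral_exp_mul_sin_rpow_eq_oscIntegral (p : ℝ) {q : ℝ} (hq : 0 < q) (k : ℕ) :
    ∫ r in Ioi (0 : ℝ), (Real.exp (-r ^ (2 * p) + r ^ 2) * Real.sin (r ^ (2 * q))) *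
        Real.exp (-r ^ 2) * r ^ (2 * k + 1) =
      (2 * q)⁻¹ * oscIntegral (p / q) ((k + 1) * (1 / q)) := by
  rw [oscIntegral, ← integral_comp_rpow_Ioi_of_pos (p := 2 * q) (by positivity)
    (g := fun t ↦ t ^ ((k + 1) * (1 / q) - 1) * Real.exp (-t ^ (p / q)) * Real.sin t),
    ← integral_const_mul]
  refine setIntegral_congr_fun measurableSet_Ioi fun r hr ↦ ?_
  have hr0 : 0 < r := hr
  have hpow : r ^ (2 * q - 1) * r ^ (2 * q * ((k + 1) * (1 / q) - 1)) = r ^ (2 * k + 1) := by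
    rw [← Real.rpow_add hr0, ← Real.rpow_natCast]
    congr 1
    push_cast
    field_simp
    ring
  have hexp : Real.exp (-r ^ (2 * p) + r ^ 2) * Real.exp (-r ^ 2) = Real.exp (-r ^ (2 * p)) := by
    rw [← Real.exp_add, add_neg_cancel_right]
  simp only [smul_eq_mul]
  rw [← Real.rpow_mul hr0.le, ← Real.rpow_mul hr0.le, show 2 * q * (p / q) = 2 * p by field_simp,
    ← hpow, ← hexp]
  field_simp

theorem stmt15 (p q : ℝ) (hp : 1 < p) (hpq : p < q) :
    ∀ k : ℕ,
      |∫ r in Set.Ioi (0 : ℝ),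
          (Real.exp (-r ^ (2 * p) + r ^ 2) * Real.sin (r ^ (2 * q))) *
            Real.exp (-r ^ 2) * r ^ (2 * k + 1)| ≤
        Real.Gamma (((k : ℝ) + 2) / q) / (2 * q + 1) := by
  intro k
  have hq : 0 < q := by linarith
  have hmain := abs_oscIntegral_natCast_add_one_mul_le_Gamma (div_le_one_of_le₀ hpq.le hq.le)
    (one_div_pos.mpr hq) (div_le_div_of_nonneg_right hp.le hq.le) k
  rw [integral_exp_mul_sin_rpow_eq_oscIntegral p hq, abs_mul, abs_of_pos (by positivity),
    le_div_iff₀ (by positivity)]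
  calc (2 * q)⁻¹ * |oscIntegral (p / q) ((k + 1) * (1 / q))| * (2 * q + 1)
      = |oscIntegral (p / q) ((k + 1) * (1 / q))| * (1 + 1 / q / 2) := by field_simp
    _ ≤ Real.Gamma ((k + 1) * (1 / q) + 1 / q) := hmain
    _ = Real.Gamma ((k + 2) / q) := by ring_nf
end

section
/- Moment vanishing implies support restriction (used via Boas Thm 6.9.5): if V : [0,R] → ℝ is bounded measurable and there exist θ ∈ (0,1), b ∈ (0,R], and C > 0 with |∫_0^R V(r) r^{2k} dr| ≤ C·(θ b)^{2k} for all k ∈ ℕ, then V(r) = 0 for almost every r ∈ (θb, R]. -/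
/-!
As `n → ∞`, the kernels `1 - exp (-(r / y) ^ n / n)` converge boundedly on `[0, R]` to the indicator
of `r > y`; the factor `1 / n` makes the limit vanish at `r = y` as well, so atoms are harmless.
Expanding the exponential, the integral of `f` against such a kernel is a series in the moments of
`f` whose exponents are positive multiples of `n`, and the moment hypothesis bounds it by
`C * (exp ((a / y) ^ n / n) - 1)`, which tends to `0` as soon as `a ≤ y`. Hence `f` has integral
zero over every `(y, R]` with `a ≤ y`, and these intervals generate the Borel sets of `(a, R]`.
-/

open MeasureTheory Filter Topology Set

lemma hasSum_exp_sub_one (x : ℝ) :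
    HasSum (fun k : ℕ ↦ x ^ (k + 1) / (k + 1).factorial) (Real.exp x - 1) := by
  have h := NormedSpace.expSeries_div_hasSum_exp x
  rw [← Real.exp_eq_exp_ℝ] at h
  simpa using (hasSum_nat_add_iff' 1).mpr h

lemma abs_one_sub_exp_neg_le_one {x : ℝ} (hx : 0 ≤ x) : |1 - Real.exp (-x)| ≤ 1 := by
  have hpos := Real.exp_pos (-x)
  have hle : Real.exp (-x) ≤ 1 := Real.exp_le_one_iff.mpr (neg_nonpos.mpr hx)
  rw [abs_le]
  constructor <;> linarith

section CriticalScale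

variable {r y : ℝ}

lemma inv_mul_pow_mul_pow (r y : ℝ) (n : ℕ) : (n * y ^ n)⁻¹ * r ^ n = (r / y) ^ n / n := by
  rw [div_pow, mul_inv, div_div, div_eq_mul_inv, mul_inv]
  ring

lemma tendsto_inv_mul_pow_mul_pow_zero (hr : 0 ≤ r) (hry : r ≤ y) :
    Tendsto (fun n : ℕ ↦ ((n : ℝ) * y ^ n)⁻¹ * r ^ n) atTop (𝓝 0) := by
  simp only [inv_mul_pow_mul_pow]
  have hy : 0 ≤ y := hr.trans hry
  refine squeeze_zero (fun n ↦ by positivity) (fun n ↦ ?_)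
    (tendsto_one_div_atTop_nhds_zero_nat (𝕜 := ℝ))
  gcongr
  exact pow_le_one₀ (by positivity) (div_le_one_of_le₀ hry hy)

lemma tendsto_inv_mul_pow_mul_pow_atTop (hy : 0 < y) (hyr : y < r) :
    Tendsto (fun n : ℕ ↦ ((n : ℝ) * y ^ n)⁻¹ * r ^ n) atTop atTop := by
  have hinv : Tendsto (fun n : ℕ ↦ (n : ℝ) ^ 1 / (r / y) ^ n) atTop (𝓝[>] 0) := by
    refine tendsto_nhdsWithin_iff.mpr
      ⟨tendsto_pow_const_div_const_pow_of_one_lt 1 ((one_lt_div hy).mpr hyr), ?_⟩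
    filter_upwards [eventually_gt_atTop 0] with n hn
    have hr : 0 < r := hy.trans hyr
    simp only [mem_Ioi]
    positivity
  refine hinv.inv_tendsto_nhdsGT_zero.congr fun n ↦ ?_
  rw [inv_mul_pow_mul_pow, Pi.inv_apply, inv_div, pow_one]

lemma tendsto_one_sub_exp_neg_indicator_Ioi (hy : 0 < y) (hr : 0 ≤ r) :
    Tendsto (fun n : ℕ ↦ 1 - Real.exp (-(((n : ℝ) * y ^ n)⁻¹ * r ^ n))) atTop
      (𝓝 ((Ioi y).indicator 1 r)) := by
  rcases le_or_gt r y with hry | hyr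
  · rw [indicator_of_notMem (notMem_Ioi.mpr hry)]
    simpa using ((tendsto_inv_mul_pow_mul_pow_zero hr hry).neg.rexp).const_sub 1
  · rw [indicator_of_mem (mem_Ioi.mpr hyr)]
    simpa using (Real.tendsto_exp_neg_atTop_nhds_zero.comp
      (tendsto_inv_mul_pow_mul_pow_atTop hy hyr)).const_sub 1

end CriticalScale

section Integral

variable {α E : Type*} {mα : MeasurableSpace α} [NormedAddCommGroup E] [NormedSpace ℝ E]

lemma norm_integral_smul_le_of_hasSum {ι : Type*} [Countable ι] {μ : Measure α} {f : α → E}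
    (hf : Integrable f μ) {φ : ι → α → ℝ} {g : α → ℝ} {B m : ι → ℝ} {S : ℝ}
    (hφ : ∀ k, AEStronglyMeasurable (φ k) μ) (hφB : ∀ k, ∀ᵐ x ∂μ, |φ k x| ≤ B k)
    (hB : Summable B) (hg : ∀ᵐ x ∂μ, HasSum (fun k ↦ φ k x) (g x))
    (hm : ∀ k, ‖∫ x, φ k x • f x ∂μ‖ ≤ m k) (hS : HasSum m S) :
    ‖∫ x, g x • f x ∂μ‖ ≤ S := by
  have hsum : HasSum (fun k ↦ ∫ x, φ k x • f x ∂μ) (∫ x, g x • f x ∂μ) := by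
    refine hasSum_integral_of_dominated_convergence (fun k x ↦ B k * ‖f x‖)
      (fun k ↦ (hφ k).smul hf.aestronglyMeasurable) (fun k ↦ ?_)
      (.of_forall fun x ↦ hB.mul_right _) ?_ ?_
    · filter_upwards [hφB k] with x hx
      rw [norm_smul]
      gcongr
      exact hx
    · simpa only [tsum_mul_right] using hf.norm.const_mul _
    · filter_upwards [hg] with x hx using hx.smul_const (f x)
  exact hsum.norm_le_of_bounded hS hm

lemma ae_eq_zero_of_forall_setIntegral_piSystem_eq_zero [CompleteSpace E] {μ : Measure α}
    {f : α → E} (hf : Integrable f μ) {S : Set (Set α)} (hgen : mα = .generateFrom S)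
    (hpi : IsPiSystem S) (huniv : ∫ x, f x ∂μ = 0) (hS : ∀ s ∈ S, ∫ x in s, f x ∂μ = 0) :
    f =ᵐ[μ] 0 := by
  suffices h : ∀ s, MeasurableSet s → ∫ x in s, f x ∂μ = 0 from
    hf.ae_eq_zero_of_forall_setIntegral_eq_zero fun s hs _ ↦ h s hs
  intro s hs
  induction s, hs using MeasurableSpace.induction_on_inter hgen hpi with
  | empty => simp
  | basic s hs => exact hS s hs
  | compl s hs ih => simpa only [ih, zero_add, huniv] using integral_add_compl hs hf
  | iUnion s hdisj hs ih =>
    simp only [integral_iUnion hs hdisj hf.integrableOn, ih, tsum_zero]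

end Integral

section Moments

variable {E : Type*} [NormedAddCommGroup E] [NormedSpace ℝ E] {μ : Measure ℝ} {f : ℝ → E}
  {R a C : ℝ}

lemma norm_integral_one_sub_exp_smul_le (hμ : ∀ᵐ r ∂μ, |r| ≤ R) (hf : Integrable f μ) {n : ℕ}
    (hmom : ∀ k : ℕ, ‖∫ r, r ^ (n * k) • f r ∂μ‖ ≤ C * a ^ (n * k)) {t : ℝ} (ht : 0 ≤ t) :
    ‖∫ r, (1 - Real.exp (-(t * r ^ n))) • f r ∂μ‖ ≤ C * (Real.exp (t * a ^ n) - 1) := by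
  let φ (k : ℕ) (r : ℝ) : ℝ := -((-(t * r ^ n)) ^ (k + 1) / (k + 1).factorial)
  have hφ_eq (k : ℕ) (r : ℝ) :
      φ k r = -((-t) ^ (k + 1) / (k + 1).factorial) * r ^ (n * (k + 1)) := by
    simp only [φ, ← neg_mul, mul_pow, pow_mul]
    ring
  have hφ_abs (k : ℕ) (r : ℝ) : |φ k r| = (t * |r| ^ n) ^ (k + 1) / (k + 1).factorial := by
    simp only [φ, abs_neg, abs_div, abs_pow, abs_mul, abs_of_nonneg ht, Nat.abs_cast]
  refine norm_integral_smul_le_of_hasSum hf (φ := φ)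
    (B := fun k ↦ (t * R ^ n) ^ (k + 1) / (k + 1).factorial)
    (fun k ↦ (by fun_prop : Continuous (φ k)).aestronglyMeasurable) (fun k ↦ ?_)
    (hasSum_exp_sub_one _).summable (.of_forall fun r ↦ ?_) (fun k ↦ ?_)
    ((hasSum_exp_sub_one (t * a ^ n)).mul_left C)
  · filter_upwards [hμ] with r hr
    rw [hφ_abs]
    gcongr
  · simpa only [neg_sub] using (hasSum_exp_sub_one (-(t * r ^ n))).neg
  · calc ‖∫ r, φ k r • f r ∂μ‖
        = t ^ (k + 1) / (k + 1).factorial * ‖∫ r, r ^ (n * (k + 1)) • f r ∂μ‖ := by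
          simp only [hφ_eq, mul_smul, integral_smul, norm_smul, norm_neg, norm_div, norm_pow,
            Real.norm_of_nonneg ht, RCLike.norm_natCast]
      _ ≤ t ^ (k + 1) / (k + 1).factorial * (C * a ^ (n * (k + 1))) := by
          gcongr
          exact hmom (k + 1)
      _ = C * ((t * a ^ n) ^ (k + 1) / (k + 1).factorial) := by
          rw [mul_pow, ← pow_mul]
          ring

lemma tendsto_integral_one_sub_exp_smul (hμ : ∀ᵐ r ∂μ, 0 ≤ r) (hf : Integrable f μ) {y : ℝ}
    (hy : 0 < y) :
    Tendsto (fun n : ℕ ↦ ∫ r, (1 - Real.exp (-(((n : ℝ) * y ^ n)⁻¹ * r ^ n))) • f r ∂μ) atTop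
      (𝓝 (∫ r in Ioi y, f r ∂μ)) := by
  rw [← integral_indicator measurableSet_Ioi]
  refine tendsto_integral_of_dominated_convergence (fun r ↦ ‖f r‖)
    (fun n ↦ (by fun_prop : Continuous _).aestronglyMeasurable.smul hf.aestronglyMeasurable)
    hf.norm (fun n ↦ ?_) ?_
  · filter_upwards [hμ] with r hr
    rw [norm_smul]
    exact mul_le_of_le_one_left (norm_nonneg _) (abs_one_sub_exp_neg_le_one (by positivity))
  · filter_upwards [hμ] with r hr
    simpa only [← indicator_smul_apply_left, Pi.one_apply, one_smul] using
      (tendsto_one_sub_exp_neg_indicator_Ioi hy hr).smul_const (f r)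

lemma setIntegral_Ioi_eq_zero_of_moments_le (hμ : ∀ᵐ r ∂μ, r ∈ Icc 0 R) (hf : Integrable f μ)
    {p : ℕ} (hp : p ≠ 0) (ha : 0 < a)
    (hmom : ∀ k : ℕ, ‖∫ r, r ^ (p * k) • f r ∂μ‖ ≤ C * a ^ (p * k)) {y : ℝ} (hay : a ≤ y) :
    ∫ r in Ioi y, f r ∂μ = 0 := by
  have hy : 0 < y := ha.trans_le hay
  have hmul : Tendsto (fun m : ℕ ↦ p * m) atTop atTop :=
    tendsto_id.const_mul_atTop' (Nat.pos_of_ne_zero hp)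
  have hbound (m : ℕ) := norm_integral_one_sub_exp_smul_le (n := p * m)
    (hμ.mono fun r hr ↦ (abs_of_nonneg hr.1).trans_le hr.2) hf
    (fun k ↦ by simpa only [mul_assoc] using hmom (m * k))
    (t := (((p * m : ℕ) : ℝ) * y ^ (p * m))⁻¹) (by positivity)
  have hzero : Tendsto (fun n : ℕ ↦ C * (Real.exp (((n : ℝ) * y ^ n)⁻¹ * a ^ n) - 1)) atTop
      (𝓝 0) := by
    simpa using (((tendsto_inv_mul_pow_mul_pow_zero ha.le hay).rexp).sub_const 1).const_mul C
  exact tendsto_nhds_unique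
    ((tendsto_integral_one_sub_exp_smul (hμ.mono fun r hr ↦ hr.1) hf hy).comp hmul)
    (squeeze_zero_norm hbound (hzero.comp hmul))

end Moments

lemma ae_restrict_Ioi_eq_zero_of_forall_setIntegral_Ioi_eq_zero {E : Type*} [NormedAddCommGroup E]
    [NormedSpace ℝ E] [CompleteSpace E] {μ : Measure ℝ} {f : ℝ → E} {a : ℝ}
    (hf : IntegrableOn f (Ioi a) μ) (h : ∀ y, a ≤ y → ∫ r in Ioi y, f r ∂μ = 0) :
    f =ᵐ[μ.restrict (Ioi a)] 0 := by
  refine ae_eq_zero_of_forall_setIntegral_piSystem_eq_zero hf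
    ((BorelSpace.measurable_eq (α := ℝ)).trans (borel_eq_generateFrom_Ioi ℝ)) isPiSystem_Ioi
    (h a le_rfl) ?_
  rintro _ ⟨y, rfl⟩
  rw [Measure.restrict_restrict measurableSet_Ioi, Ioi_inter_Ioi]
  exact h _ le_sup_right

theorem stmt17_general {E : Type*} [NormedAddCommGroup E] [NormedSpace ℝ E] [CompleteSpace E]
    {μ : Measure ℝ} {f : ℝ → E} {R a C : ℝ} {p : ℕ} (hp : p ≠ 0) (ha : 0 < a)
    (hf : IntegrableOn f (Ioc 0 R) μ)
    (hmom : ∀ k : ℕ, ‖∫ r in Ioc 0 R, r ^ (p * k) • f r ∂μ‖ ≤ C * a ^ (p * k)) :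
    ∀ᵐ r ∂μ, r ∈ Ioc a R → f r = 0 := by
  have hsupp : ∀ᵐ r ∂μ.restrict (Ioc 0 R), r ∈ Icc 0 R :=
    (ae_restrict_mem measurableSet_Ioc).mono fun _ ↦ (Ioc_subset_Icc_self ·)
  have hzero : f =ᵐ[(μ.restrict (Ioc 0 R)).restrict (Ioi a)] 0 :=
    ae_restrict_Ioi_eq_zero_of_forall_setIntegral_Ioi_eq_zero hf.integrableOn fun _ ↦
      setIntegral_Ioi_eq_zero_of_moments_le hsupp hf hp ha hmom
  rw [Measure.restrict_restrict measurableSet_Ioi, inter_comm, Ioc_inter_Ioi,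
    sup_eq_right.mpr ha.le] at hzero
  exact (ae_restrict_iff' measurableSet_Ioc).mp hzero

theorem stmt17 (R b θ C : ℝ) (hR : 0 < R) (hb : 0 < b) (hbR : b ≤ R)
    (hθ : θ ∈ Set.Ioo (0 : ℝ) 1) (hC : 0 < C)
    (V : ℝ → ℝ) (hmeas : Measurable V) (hbdd : ∃ M, ∀ r ∈ Set.Icc (0 : ℝ) R, |V r| ≤ M)
    (hmom : ∀ k : ℕ, |∫ r in (0 : ℝ)..R, V r * r ^ (2 * k)| ≤ C * (θ * b) ^ (2 * k)) :
    ∀ᵐ r : ℝ, r ∈ Set.Ioc (θ * b) R → V r = 0 := by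
  obtain ⟨M, hM⟩ := hbdd
  have hint : IntegrableOn V (Ioc 0 R) :=
    .of_bound measure_Ioc_lt_top hmeas.aestronglyMeasurable M <|
      ae_restrict_of_forall_mem measurableSet_Ioc fun r hr ↦ hM r (Ioc_subset_Icc_self hr)
  refine stmt17_general (C := C) two_ne_zero (mul_pos hθ.1 hb) hint fun k ↦ ?_
  simpa only [intervalIntegral.integral_of_le hR.le, mul_comm (V _), smul_eq_mul, Real.norm_eq_abs]
    using hmom k
end
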